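/- Distance of a fixed point from Q (key estimate in the proof of Theorem 2.3): Set γ := ‖Q‖_{(d+1)/2,ℤ^k} and δ := ‖Q‖_{d+1,ℤ^k∖{0}}, assumed finite. If x ∈ D is any fixed point of T, then ‖x − Q‖_{d+1,ℤ^k∖{0}} ≤ (δ² + γ) · ‖x‖_{d+1,ℤ^k∖{0}}^d; in particular |‖x‖_{d+1,ℤ^k∖{0}} − δ| ≤ (δ² + γ) ‖x‖_{d+1,ℤ^k∖{0}}^d. -/

import Mathlib

/-!
Write `A = ∑ Q(j) x(j)^d` and `C(i) = ∑ Q(i - j) x(j)^d`. The fixed point equation reads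
`x(i) (1 + A) = Q(i) + C(i)`, so `x - Q = (C - A Q) / (1 + A)` and `|x - Q| ≤ |C| + |A Q|`
pointwise. Minkowski's inequality in `ℓ^{d+1}` then gives `‖x - Q‖ ≤ ‖C‖ + A δ`, where
`A ≤ δ ‖x‖^d` by Hölder's inequality and `‖C‖ ≤ γ ‖x‖^d` by Young's convolution inequality with
exponents `(d + 1) / 2` and `(d + 1) / d`. The second estimate is the reverse triangle inequality.

Young's inequality for `1 / p + 1 / q = 1 + 1 / r` is Hölder's inequality for the splitting
`a b = (a^p b^q)^(1 / r) (a^p)^(1 / p - 1 / r) (b^q)^(1 / q - 1 / r)`, followed by an exchange of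
sums. It is proved with values in `[0, ∞]`, where this exchange is free.
-/

open scoped BigOperators
open Filter Topology

noncomputable section

/-- The integer lattice `ℤ^k`. -/
abbrev ZkL (k : ℕ) := Fin k → ℤ

/-- The punctured integer lattice `ℤ^k ∖ {0}`, as a subtype. -/
abbrev ZkP (k : ℕ) := {j : ZkL k // j ≠ 0}

/-- The `p`-norm `‖x‖_{p, ℤ^k}` of a function on all of `ℤ^k`. -/
noncomputable def normFull (k : ℕ) (p : ℝ) (x : ZkL k → ℝ) : ℝ :=
  (∑' j : ZkL k, |x j| ^ p) ^ (1 / p)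

/-- The `p`-norm `‖x‖_{p, ℤ^k ∖ {0}}` of a function on `ℤ^k`, restricted to nonzero sites. -/
noncomputable def normPunct (k : ℕ) (p : ℝ) (x : ZkL k → ℝ) : ℝ :=
  (∑' j : ZkP k, |x j.1| ^ p) ^ (1 / p)

/-- The `p`-norm of a function defined on `ℤ^k ∖ {0}`. -/
noncomputable def norm0 (k : ℕ) (p : ℝ) (x : ZkP k → ℝ) : ℝ :=
  (∑' j : ZkP k, |x j| ^ p) ^ (1 / p)

/-- `γ := ‖Q‖_{(d+1)/2, ℤ^k}`. -/
noncomputable def gam (k d : ℕ) (Q : ZkL k → ℝ) : ℝ := normFull k (((d : ℝ) + 1) / 2) Q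

/-- `δ := ‖Q‖_{d+1, ℤ^k ∖ {0}}`. -/
noncomputable def del (k d : ℕ) (Q : ZkL k → ℝ) : ℝ := normPunct k ((d : ℝ) + 1) Q

/-- Membership in `D`: an element of `ℓ^{d+1}(ℤ^k ∖ {0})` with nonnegative entries. -/
def memD (k d : ℕ) (x : ZkP k → ℝ) : Prop :=
  Summable (fun j : ZkP k => |x j| ^ ((d : ℝ) + 1)) ∧ ∀ j : ZkP k, 0 ≤ x j

/-- The operator `T`:
`T(x)(i) = (Q(i) + Σ_{j≠0} Q(i−j) x(j)^d) / (1 + Σ_{j≠0} Q(j) x(j)^d)`. -/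
noncomputable def opT (k d : ℕ) (Q : ZkL k → ℝ) (x : ZkP k → ℝ) (i : ZkL k) : ℝ :=
  (Q i + ∑' j : ZkP k, Q (i - j.1) * x j ^ d) /
  (1 + ∑' j : ZkP k, Q j.1 * x j ^ d)

/-- The good set `G_d`. -/
def goodSet (d : ℕ) : Set (ℝ × ℝ) :=
  {gd | 1 < gd.1 ∧ 0 < gd.2 ∧ ∃ ε > 0,
    gd.2 + gd.1 * ε ^ d ≤ ε ∧
    2 * d * gd.1 * ε ^ (d - 1) + 2 * d * gd.2 * ε ^ d < 1}

/-- The `ℓ^p` norm `(∑ |f i| ^ p) ^ (1 / p)` of a real family over an arbitrary index type, of which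
`normFull`, `normPunct` and `norm0` are instances. It carries information only when `|f| ^ p` is
summable: otherwise the `tsum` is `0`. -/
def ellpNorm {ι : Type*} (p : ℝ) (f : ι → ℝ) : ℝ := (∑' i, |f i| ^ p) ^ (1 / p)

section EllpNorm

variable {ι : Type*} {p q r : ℝ} {f g h : ι → ℝ}

lemma ellpNorm_nonneg : 0 ≤ ellpNorm p f := by
  unfold ellpNorm; positivity

lemma summable_abs_const_mul_rpow (c : ℝ) (hf : Summable fun i => |f i| ^ p) :
    Summable fun i => |c * f i| ^ p := by
  simpa only [abs_mul, Real.mul_rpow (abs_nonneg _) (abs_nonneg _)] using hf.mul_left _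

lemma ellpNorm_const_mul (hp : p ≠ 0) (c : ℝ) :
    ellpNorm p (fun i => c * f i) = |c| * ellpNorm p f := by
  simp only [ellpNorm, abs_mul, Real.mul_rpow (abs_nonneg _) (abs_nonneg _), tsum_mul_left]
  rw [Real.mul_rpow (by positivity) (by positivity), one_div,
    Real.rpow_rpow_inv (abs_nonneg c) hp]

lemma abs_abs_rpow_rpow (a s t : ℝ) : |(|a| ^ s)| ^ t = |a| ^ (s * t) := by
  rw [abs_of_nonneg (by positivity), ← Real.rpow_mul (abs_nonneg a)]

lemma ellpNorm_abs_rpow {s : ℝ} (hs : s ≠ 0) :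
    ellpNorm q (fun i => |f i| ^ s) = ellpNorm (s * q) f ^ s := by
  simp only [ellpNorm, abs_abs_rpow_rpow]
  rw [← Real.rpow_mul (by positivity)]
  congr 1
  field_simp

lemma summable_abs_rpow_of_le (hp : 0 < p) (hpq : p ≤ q) (hf : Summable fun i => |f i| ^ p) :
    Summable fun i => |f i| ^ q := by
  have hp' : (ENNReal.ofReal p).toReal = p := ENNReal.toReal_ofReal hp.le
  have hq' : (ENNReal.ofReal q).toReal = q := ENNReal.toReal_ofReal (hp.le.trans hpq)
  have hmem : Memℓp f (ENNReal.ofReal p) :=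
    memℓp_gen (by simpa only [hp', Real.norm_eq_abs] using hf)
  simpa only [hq', Real.norm_eq_abs] using
    (hmem.of_exponent_ge (ENNReal.ofReal_le_ofReal hpq)).summable (by linarith)

lemma summable_and_ellpNorm_le_add (hp : 1 ≤ p) (hle : ∀ i, |h i| ≤ |f i| + |g i|)
    (hf : Summable fun i => |f i| ^ p) (hg : Summable fun i => |g i| ^ p) :
    (Summable fun i => |h i| ^ p) ∧ ellpNorm p h ≤ ellpNorm p f + ellpNorm p g := by
  obtain ⟨hsum, hadd⟩ := Real.Lp_add_le_tsum_of_nonneg hp (fun i => abs_nonneg (f i))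
    (fun i => abs_nonneg (g i)) hf hg
  have hpow : ∀ i, |h i| ^ p ≤ (|f i| + |g i|) ^ p := fun i =>
    Real.rpow_le_rpow (abs_nonneg _) (hle i) (by linarith)
  have hh : Summable fun i => |h i| ^ p := hsum.of_nonneg_of_le (fun i => by positivity) hpow
  exact ⟨hh, (Real.rpow_le_rpow (by positivity) (hh.tsum_le_tsum hpow hsum)
    (by positivity)).trans hadd⟩

lemma abs_ellpNorm_sub_ellpNorm_le (hp : 1 ≤ p) (hf : Summable fun i => |f i| ^ p)
    (hg : Summable fun i => |g i| ^ p) :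
    |ellpNorm p f - ellpNorm p g| ≤ ellpNorm p (fun i => f i - g i) := by
  have hfg : Summable fun i => |f i - g i| ^ p :=
    (summable_and_ellpNorm_le_add hp (fun i => abs_sub (f i) (g i)) hf hg).1
  have hf_le : ellpNorm p f ≤ ellpNorm p (fun i => f i - g i) + ellpNorm p g :=
    (summable_and_ellpNorm_le_add hp
      (fun i => by simpa only [sub_add_cancel] using abs_add_le (f i - g i) (g i)) hfg hg).2
  have hg_le : ellpNorm p g ≤ ellpNorm p f + ellpNorm p (fun i => f i - g i) :=
    (summable_and_ellpNorm_le_add hp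
      (fun i => by simpa only [sub_sub_cancel] using abs_sub (f i) (f i - g i)) hf hfg).2
  rw [abs_sub_le_iff]
  constructor <;> linarith

lemma abs_tsum_mul_le_ellpNorm_mul_ellpNorm (hpq : p.HolderConjugate q)
    (hf : Summable fun i => |f i| ^ p) (hg : Summable fun i => |g i| ^ q) :
    |∑' i, f i * g i| ≤ ellpNorm p f * ellpNorm q g := by
  obtain ⟨hsum, hle⟩ := Real.summable_and_inner_le_Lp_mul_Lq_tsum_of_nonneg hpq
    (fun i => abs_nonneg (f i)) (fun i => abs_nonneg (g i)) hf hg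
  calc |∑' i, f i * g i| ≤ ∑' i, |f i| * |g i| := by
        simpa only [Real.norm_eq_abs, abs_mul] using
          norm_tsum_le_tsum_norm (f := fun i => f i * g i)
            (by simpa only [Real.norm_eq_abs, abs_mul] using hsum)
    _ ≤ ellpNorm p f * ellpNorm q g := by simpa only [ellpNorm] using hle

lemma enorm_rpow_eq_ofReal (hp : 0 ≤ p) (a : ℝ) : ‖a‖ₑ ^ p = ENNReal.ofReal (|a| ^ p) := by
  rw [Real.enorm_eq_ofReal_abs, ENNReal.ofReal_rpow_of_nonneg (abs_nonneg a) hp]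

lemma ofReal_ellpNorm (hp : 0 < p) (hf : Summable fun i => |f i| ^ p) :
    ENNReal.ofReal (ellpNorm p f) = (∑' i, ‖f i‖ₑ ^ p) ^ (1 / p) := by
  simp only [ellpNorm, enorm_rpow_eq_ofReal hp.le]
  rw [← ENNReal.ofReal_rpow_of_nonneg (by positivity) (by positivity),
    ENNReal.ofReal_tsum_of_nonneg (fun i => by positivity) hf]

lemma summable_and_ellpNorm_le_of_tsum_enorm_le (hp : 0 < p) {B : ℝ} (hB : 0 ≤ B)
    (hf : (∑' i, ‖f i‖ₑ ^ p) ^ (1 / p) ≤ ENNReal.ofReal B) :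
    (Summable fun i => |f i| ^ p) ∧ ellpNorm p f ≤ B := by
  have hfin : ∑' i, ‖f i‖ₑ ^ p ≠ ⊤ := fun htop => by
    rw [htop, ENNReal.top_rpow_of_pos (by positivity)] at hf
    exact ENNReal.ofReal_ne_top (top_le_iff.1 hf)
  have hsum : Summable fun i => |f i| ^ p := by
    simpa only [← ENNReal.toReal_rpow, toReal_enorm, Real.norm_eq_abs] using
      ENNReal.summable_toReal hfin
  exact ⟨hsum, (ENNReal.ofReal_le_ofReal_iff hB).1 (ofReal_ellpNorm hp hsum ▸ hf)⟩

end EllpNorm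

section Young

open scoped ENNReal

variable {ι κ : Type*} {p q r : ℝ}

lemma tsum_prod_rpow_le (s : Finset ι) (f : ι → κ → ℝ≥0∞) {w : ι → ℝ} (hw : ∑ i ∈ s, w i = 1)
    (hw₀ : ∀ i ∈ s, 0 ≤ w i) :
    ∑' k, ∏ i ∈ s, f i k ^ w i ≤ ∏ i ∈ s, (∑' k, f i k) ^ w i := by
  let _ : MeasurableSpace κ := ⊤
  simpa only [MeasureTheory.lintegral_count] using
    ENNReal.lintegral_prod_norm_pow_le (μ := MeasureTheory.Measure.count) s
      (fun i _ => (Measurable.of_discrete (f := f i)).aemeasurable) hw hw₀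

lemma rpow_rpow_mul_rpow_rpow_sub (hp : 0 < p) (hr : 0 < r) (hrp : 1 / r ≤ 1 / p) (a : ℝ≥0∞) :
    (a ^ p) ^ (1 / r) * (a ^ p) ^ (1 / p - 1 / r) = a := by
  rw [← ENNReal.rpow_add_of_nonneg _ _ (by positivity) (sub_nonneg.2 hrp), add_sub_cancel,
    one_div, ENNReal.rpow_rpow_inv hp.ne']

lemma tsum_mul_le_of_young_exponents (hp : 0 < p) (hq : 0 < q) (hr : 0 < r) (hrp : 1 / r ≤ 1 / p)
    (hrq : 1 / r ≤ 1 / q) (hpqr : 1 / p + 1 / q = 1 + 1 / r) (a b : κ → ℝ≥0∞) :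
    ∑' j, a j * b j ≤ (∑' j, a j ^ p * b j ^ q) ^ (1 / r) *
      ((∑' j, a j ^ p) ^ (1 / p - 1 / r) * (∑' j, b j ^ q) ^ (1 / q - 1 / r)) := by
  have hsplit : ∀ j, a j * b j = (a j ^ p * b j ^ q) ^ (1 / r) *
      ((a j ^ p) ^ (1 / p - 1 / r) * (b j ^ q) ^ (1 / q - 1 / r)) := fun j => by
    rw [ENNReal.mul_rpow_of_nonneg _ _ (by positivity), mul_mul_mul_comm,
      rpow_rpow_mul_rpow_rpow_sub hp hr hrp, rpow_rpow_mul_rpow_rpow_sub hq hr hrq]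
  let w := ![1 / r, 1 / p - 1 / r, 1 / q - 1 / r]
  have hw : ∑ i, w i = 1 := by
    simp only [w, Fin.sum_univ_three, Matrix.cons_val]
    linarith
  have hw₀ : ∀ i, 0 ≤ w i := by
    simp only [w, Fin.forall_fin_succ, Matrix.cons_val_zero, Matrix.cons_val_succ, sub_nonneg,
      hrp, hrq, one_div_nonneg, hr.le, IsEmpty.forall_iff, and_self]
  rw [tsum_congr hsplit]
  simpa only [w, Fin.prod_univ_three, Matrix.cons_val, mul_assoc] using
    tsum_prod_rpow_le Finset.univ ![fun j => a j ^ p * b j ^ q, fun j => a j ^ p, fun j => b j ^ q]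
      hw fun i _ => hw₀ i

lemma tsum_kernel_rpow_le_young (hp : 1 ≤ p) (hq : 1 ≤ q) (hr : 0 < r)
    (hpqr : 1 / p + 1 / q = 1 + 1 / r) {K : ι → κ → ℝ≥0∞} {A : ℝ≥0∞}
    (hrow : ∀ i, ∑' j, K i j ^ p ≤ A) (hcol : ∀ j, ∑' i, K i j ^ p ≤ A) (g : κ → ℝ≥0∞) :
    (∑' i, (∑' j, K i j * g j) ^ r) ^ (1 / r) ≤ A ^ (1 / p) * (∑' j, g j ^ q) ^ (1 / q) := by
  have hp₀ : 0 < p := by linarith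
  have hq₀ : 0 < q := by linarith
  have hrp : 1 / r ≤ 1 / p := by linarith [div_le_one_of_le₀ hq hq₀.le]
  have hrq : 1 / r ≤ 1 / q := by linarith [div_le_one_of_le₀ hp hp₀.le]
  set X := ∑' j, g j ^ q
  set M := A ^ (1 / p - 1 / r) * X ^ (1 / q - 1 / r)
  have hpoint : ∀ i, (∑' j, K i j * g j) ^ r ≤ (∑' j, K i j ^ p * g j ^ q) * M ^ r := fun i =>
    calc (∑' j, K i j * g j) ^ r
        ≤ ((∑' j, K i j ^ p * g j ^ q) ^ (1 / r) * M) ^ r := by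
          gcongr
          refine (tsum_mul_le_of_young_exponents hp₀ hq₀ hr hrp hrq hpqr (K i) g).trans ?_
          exact mul_le_mul_right (mul_le_mul_left
            (ENNReal.rpow_le_rpow (hrow i) (sub_nonneg.2 hrp)) _) _
      _ = (∑' j, K i j ^ p * g j ^ q) * M ^ r := by
          rw [ENNReal.mul_rpow_of_nonneg _ _ hr.le, one_div, ENNReal.rpow_inv_rpow hr.ne']
  have hswap : ∑' i, ∑' j, K i j ^ p * g j ^ q ≤ A * X := by
    rw [ENNReal.tsum_comm, ← ENNReal.tsum_mul_left]
    gcongr with j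
    rw [ENNReal.tsum_mul_right]
    gcongr
    exact hcol j
  calc (∑' i, (∑' j, K i j * g j) ^ r) ^ (1 / r)
      ≤ (∑' i, (∑' j, K i j ^ p * g j ^ q) * M ^ r) ^ (1 / r) := by gcongr with i; exact hpoint i
    _ ≤ (A * X * M ^ r) ^ (1 / r) := by rw [ENNReal.tsum_mul_right]; gcongr
    _ = (A ^ (1 / r) * A ^ (1 / p - 1 / r)) * (X ^ (1 / r) * X ^ (1 / q - 1 / r)) := by
        rw [ENNReal.mul_rpow_of_nonneg _ _ (by positivity),
          ENNReal.mul_rpow_of_nonneg _ _ (by positivity), one_div, ENNReal.rpow_rpow_inv hr.ne',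
          mul_mul_mul_comm, ← one_div]
    _ = A ^ (1 / p) * X ^ (1 / q) := by
        rw [← ENNReal.rpow_add_of_nonneg _ _ (by positivity) (sub_nonneg.2 hrp),
          ← ENNReal.rpow_add_of_nonneg _ _ (by positivity) (sub_nonneg.2 hrq),
          add_sub_cancel, add_sub_cancel]

theorem summable_and_ellpNorm_convolution_le_young {G : Type*} [AddGroup G] (S : Set G) (hp : 1 ≤ p)
    (hq : 1 ≤ q) (hr : 0 < r) (hpqr : 1 / p + 1 / q = 1 + 1 / r) {f : G → ℝ} {g : S → ℝ}
    (hf : Summable fun i => |f i| ^ p) (hg : Summable fun i => |g i| ^ q) :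
    (Summable fun i : S => |∑' j : S, f (i - j) * g j| ^ r) ∧
      ellpNorm r (fun i : S => ∑' j : S, f (i - j) * g j) ≤ ellpNorm p f * ellpNorm q g := by
  have hrow : ∀ i : S, ∑' j : S, ‖f (i - j)‖ₑ ^ p ≤ ∑' l, ‖f l‖ₑ ^ p := fun i =>
    ENNReal.tsum_comp_le_tsum_of_injective
      (sub_right_injective.comp Subtype.val_injective) (fun l => ‖f l‖ₑ ^ p)
  have hcol : ∀ j : S, ∑' i : S, ‖f (i - j)‖ₑ ^ p ≤ ∑' l, ‖f l‖ₑ ^ p := fun j =>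
    ENNReal.tsum_comp_le_tsum_of_injective
      (sub_left_injective.comp Subtype.val_injective) (fun l => ‖f l‖ₑ ^ p)
  refine summable_and_ellpNorm_le_of_tsum_enorm_le hr
    (mul_nonneg ellpNorm_nonneg ellpNorm_nonneg) ?_
  calc (∑' i : S, ‖∑' j : S, f (i - j) * g j‖ₑ ^ r) ^ (1 / r)
      ≤ (∑' i : S, (∑' j : S, ‖f (i - j)‖ₑ * ‖g j‖ₑ) ^ r) ^ (1 / r) := by
        simp only [← enorm_mul]
        gcongr
        -- True also where the inner real sum diverges, since that `tsum` is then `0`.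
        exact enorm_tsum_le_tsum_enorm
    _ ≤ (∑' l, ‖f l‖ₑ ^ p) ^ (1 / p) * (∑' j, ‖g j‖ₑ ^ q) ^ (1 / q) :=
        tsum_kernel_rpow_le_young hp hq hr hpqr hrow hcol fun j => ‖g j‖ₑ
    _ = ENNReal.ofReal (ellpNorm p f * ellpNorm q g) := by
        rw [ENNReal.ofReal_mul ellpNorm_nonneg, ofReal_ellpNorm (by linarith) hf,
          ofReal_ellpNorm (by linarith) hg]

end Young

section FixedPoint

variable {d : ℝ}

lemma abs_tsum_mul_rpow_le {ι : Type*} (hd : 0 < d) {f x : ι → ℝ}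
    (hf : Summable fun i => |f i| ^ (d + 1)) (hx : Summable fun i => |x i| ^ (d + 1)) :
    |∑' i, f i * |x i| ^ d| ≤ ellpNorm (d + 1) f * ellpNorm (d + 1) x ^ d := by
  have hmul : d * ((d + 1) / d) = d + 1 := by field_simp
  have hconj : (d + 1).HolderConjugate ((d + 1) / d) :=
    Real.holderConjugate_iff.2 ⟨by linarith, by field_simp; ring⟩
  have hle := abs_tsum_mul_le_ellpNorm_mul_ellpNorm hconj hf (g := fun i => |x i| ^ d)
    (by simpa only [abs_abs_rpow_rpow, hmul] using hx)
  rwa [ellpNorm_abs_rpow hd.ne', hmul] at hle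

lemma summable_and_ellpNorm_convolution_rpow_le {G : Type*} [AddGroup G] (S : Set G) (hd : 1 ≤ d)
    {f : G → ℝ} {x : S → ℝ} (hf : Summable fun i => |f i| ^ ((d + 1) / 2))
    (hx : Summable fun i => |x i| ^ (d + 1)) :
    (Summable fun i : S => |∑' j : S, f (i - j) * |x j| ^ d| ^ (d + 1)) ∧
      ellpNorm (d + 1) (fun i : S => ∑' j : S, f (i - j) * |x j| ^ d) ≤
        ellpNorm ((d + 1) / 2) f * ellpNorm (d + 1) x ^ d := by
  have hd₀ : 0 < d := by linarith
  have hmul : d * ((d + 1) / d) = d + 1 := by field_simp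
  have hyoung : 1 / ((d + 1) / 2) + 1 / ((d + 1) / d) = 1 + 1 / (d + 1) := by field_simp; ring
  have hle := summable_and_ellpNorm_convolution_le_young S (by linarith)
    (by rw [le_div_iff₀ hd₀]; linarith) (by linarith) hyoung hf (g := fun j => |x j| ^ d)
    (by simpa only [abs_abs_rpow_rpow, hmul] using hx)
  rwa [ellpNorm_abs_rpow hd₀.ne', hmul] at hle

lemma abs_sub_le_of_add_div_one_add_eq {a c q x : ℝ} (ha : 0 ≤ a) (h : (q + c) / (1 + a) = x) :
    |x - q| ≤ |c| + |a * q| := by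
  have ha₁ : 0 < 1 + a := by linarith
  have hdiff : x - q = (c - a * q) / (1 + a) := by rw [← h]; field_simp; ring
  calc |x - q| = |c - a * q| / (1 + a) := by rw [hdiff, abs_div, abs_of_pos ha₁]
    _ ≤ |c - a * q| := div_le_self (abs_nonneg _) (by linarith)
    _ ≤ |c| + |a * q| := abs_sub _ _

end FixedPoint

theorem stmt7_general {G : Type*} [AddGroup G] (S : Set G) {d : ℝ} (hd : 1 ≤ d) {Q : G → ℝ}
    (hQ : ∀ i : S, 0 ≤ Q i) (hQsum : Summable fun g => |Q g| ^ ((d + 1) / 2))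
    {x : S → ℝ} (hx : ∀ i, 0 ≤ x i) (hxsum : Summable fun i => |x i| ^ (d + 1))
    (hfix : ∀ i : S,
      (Q i + ∑' j : S, Q (i - j) * x j ^ d) / (1 + ∑' j : S, Q j * x j ^ d) = x i) :
    ellpNorm (d + 1) (fun i => x i - Q i) ≤
      (ellpNorm (d + 1) (fun i : S => Q i) ^ 2 + ellpNorm ((d + 1) / 2) Q) *
        ellpNorm (d + 1) x ^ d ∧
    |ellpNorm (d + 1) x - ellpNorm (d + 1) (fun i : S => Q i)| ≤
      (ellpNorm (d + 1) (fun i : S => Q i) ^ 2 + ellpNorm ((d + 1) / 2) Q) *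
        ellpNorm (d + 1) x ^ d := by
  set q : S → ℝ := fun i => Q i
  set A := ∑' j, q j * |x j| ^ d
  set C : S → ℝ := fun i => ∑' j : S, Q (i - j) * |x j| ^ d
  have hqsum : Summable fun i => |q i| ^ (d + 1) :=
    summable_abs_rpow_of_le (by linarith) (by linarith)
      (hQsum.comp_injective Subtype.val_injective)
  have hA : 0 ≤ A := tsum_nonneg fun j => mul_nonneg (hQ j) (by positivity)
  have hA_le : A ≤ ellpNorm (d + 1) q * ellpNorm (d + 1) x ^ d :=
    (le_abs_self A).trans (abs_tsum_mul_rpow_le (by linarith) hqsum hxsum)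
  obtain ⟨hCsum, hC_le⟩ := summable_and_ellpNorm_convolution_rpow_le S hd hQsum hxsum
  have hpoint : ∀ i, |x i - q i| ≤ |C i| + |A * q i| := fun i =>
    abs_sub_le_of_add_div_one_add_eq hA
      (by simpa only [A, C, q, abs_of_nonneg (hx _)] using hfix i)
  have hdist : ellpNorm (d + 1) (fun i => x i - q i) ≤
      (ellpNorm (d + 1) q ^ 2 + ellpNorm ((d + 1) / 2) Q) * ellpNorm (d + 1) x ^ d :=
    calc ellpNorm (d + 1) (fun i => x i - q i)
        ≤ ellpNorm (d + 1) C + ellpNorm (d + 1) (fun i => A * q i) :=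
          (summable_and_ellpNorm_le_add (by linarith) hpoint hCsum
            (summable_abs_const_mul_rpow A hqsum)).2
      _ = ellpNorm (d + 1) C + A * ellpNorm (d + 1) q := by
          rw [ellpNorm_const_mul (by linarith), abs_of_nonneg hA]
      _ ≤ ellpNorm ((d + 1) / 2) Q * ellpNorm (d + 1) x ^ d +
          ellpNorm (d + 1) q * ellpNorm (d + 1) x ^ d * ellpNorm (d + 1) q := by
          gcongr; exact ellpNorm_nonneg
      _ = _ := by ring
  exact ⟨hdist, (abs_ellpNorm_sub_ellpNorm_le (by linarith) hxsum hqsum).trans hdist⟩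

/-- key estimate in the proof of Theorem 2.3: distance of a fixed point
from `Q`. If `x ∈ D` is a fixed point of `T`, then
`‖x − Q‖_{d+1,ℤ^k∖{0}} ≤ (δ² + γ)‖x‖_{d+1,ℤ^k∖{0}}^d`; in particular
`|‖x‖_{d+1,ℤ^k∖{0}} − δ| ≤ (δ² + γ)‖x‖_{d+1,ℤ^k∖{0}}^d`. -/
theorem stmt7 (k d : ℕ) (hk : 1 ≤ k) (hd : 2 ≤ d)
    (Q : ZkL k → ℝ) (hQpos : ∀ j, 0 < Q j) (hQ0 : Q 0 = 1)
    (hsum1 : Summable fun j : ZkL k => |Q j| ^ (((d : ℝ) + 1) / 2))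
    (hsum2 : Summable fun j : ZkP k => |Q j.1| ^ ((d : ℝ) + 1))
    (x : ZkP k → ℝ) (hx : memD k d x)
    (hfix : ∀ i : ZkP k, opT k d Q x i.1 = x i) :
    norm0 k ((d : ℝ) + 1) (fun i : ZkP k => x i - Q i.1) ≤
      (del k d Q ^ 2 + gam k d Q) * norm0 k ((d : ℝ) + 1) x ^ d ∧
    |norm0 k ((d : ℝ) + 1) x - del k d Q| ≤
      (del k d Q ^ 2 + gam k d Q) * norm0 k ((d : ℝ) + 1) x ^ d := by
  simpa only [Real.rpow_natCast] using! stmt7_general {j : ZkL k | j ≠ 0}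
    (Nat.one_le_cast.2 (one_le_two.trans hd)) (fun i => (hQpos i).le) hsum1 hx.2 hx.1
    (by simpa only [Real.rpow_natCast] using! hfix)
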